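/- Let μ_m > 0. There exists k₀ > 0 (depending on μ_m, m and V_s) such that for every real k ≥ k₀, every μ ∈ ℂ with Im μ ≥ μ_m, and every pair of functions A ∈ C¹([0,∞),ℂ) and φ ∈ C²([0,∞),ℂ) with A' ∈ L²(ρ), φ, φ', φ'' ∈ L²(ρ), φ(0) = 0, φ(z) → 0 as z → ∞, satisfying for all z ≥ 0 the equation (conj(μ) − V_s(z)) φ(z) − (1/(ik)) [φ''(z) + 2 (ρ'(z)/ρ(z)) φ'(z) + ((ρ'/ρ)'(z) + (ρ'(z)/ρ(z))²) φ(z)] = A'(z), the following estimates hold: ‖φ‖ ≤ (√2/Im μ) ‖A'‖, ‖φ‖_{L²} ≤ (√2/Im μ) ‖A'‖_{L²}, ‖φ'‖ ≤ (√k/√(Im μ)) ‖A'‖, ‖φ'‖_{L²} ≤ (√k/√(Im μ)) ‖A'‖_{L²}, and ‖φ''‖_{L²} ≤ C k ‖A'‖_{L²} for a constant C depending only on μ_m, m and V_s. -/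

import Mathlib

open MeasureTheory Filter

/-- Weighted `L²(ρ)` norm with weight `ρ(z) = 1 + z^m` on `(0,∞)`. -/
noncomputable def wnorm (m : ℕ) (f : ℝ → ℂ) : ℝ :=
  (∫ z in Set.Ioi (0 : ℝ), ‖f z‖ ^ 2 * (1 + z ^ m)) ^ ((1 : ℝ) / 2)

/-- Unweighted `L²(0,∞)` norm. -/
noncomputable def l2norm (f : ℝ → ℂ) : ℝ :=
  (∫ z in Set.Ioi (0 : ℝ), ‖f z‖ ^ 2) ^ ((1 : ℝ) / 2)

/-- Membership in the weighted space `L²(ρ)`, `ρ(z) = 1 + z^m`. -/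
def MemL2w (m : ℕ) (f : ℝ → ℂ) : Prop :=
  MeasureTheory.IntegrableOn (fun z : ℝ => ‖f z‖ ^ 2 * (1 + z ^ m)) (Set.Ioi 0)

/-- Membership in `L²(0,∞)`. -/
def MemL2 (f : ℝ → ℂ) : Prop :=
  MeasureTheory.IntegrableOn (fun z : ℝ => ‖f z‖ ^ 2) (Set.Ioi 0)

/-- `ρ'/ρ` for the weight `ρ(z) = 1 + z^m`. -/
noncomputable def rFun (m : ℕ) (z : ℝ) : ℝ :=
  deriv (fun w : ℝ => 1 + w ^ m) z / (1 + z ^ m)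

/-! Pair the equation with `φ` in `L²(w)`, for `w = ρ` or `w = 1`, and take imaginary parts: the
real potential `V` drops out and the damping gives `k Im μ ‖φ‖² + ‖φ'‖²`, up to drift and
zeroth-order terms. Their coefficients are bounded, because `ρ'/ρ` and `ρ''/ρ` are, so they are
absorbed once `k Im μ` is large. The bound on `φ''` cannot be read off the equation, since `V` is
unbounded. Instead expand `‖k (conj μ - V) φ + i φ''‖²`: integrating by parts, the cross term
reduces to the favourable `k Im μ ‖φ'‖²` and to a term carrying the shear `V'`, which is bounded. -/

open scoped InnerProductSpace ComplexConjugate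

section IntegralTools

lemma integral_Ioi_deriv_eq_zero_of_dominated {E : Type*} [NormedAddCommGroup E]
    [NormedSpace ℝ E] [CompleteSpace E] {F F' : ℝ → E} {g g' : ℝ → ℝ} {c : ℝ}
    (hcont : ContinuousWithinAt F (Set.Ici c) c) (hc : F c = 0)
    (hderiv : ∀ z ∈ Set.Ioi c, HasDerivAt F (F' z) z)
    (hg : IntegrableOn g (Set.Ioi c)) (hF : ∀ z ∈ Set.Ioi c, ‖F z‖ ≤ g z)
    (hg' : IntegrableOn g' (Set.Ioi c)) (hF' : ∀ z ∈ Set.Ioi c, ‖F' z‖ ≤ g' z) :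
    IntegrableOn F' (Set.Ioi c) ∧ ∫ z in Set.Ioi c, F' z = 0 := by
  have hF_meas : AEStronglyMeasurable F (volume.restrict (Set.Ioi c)) :=
    ContinuousOn.aestronglyMeasurable
      (fun z hz => (hderiv z hz).continuousAt.continuousWithinAt) measurableSet_Ioi
  have hF'_meas : AEStronglyMeasurable F' (volume.restrict (Set.Ioi c)) :=
    (aestronglyMeasurable_deriv F _).congr
      (ae_restrict_of_forall_mem measurableSet_Ioi fun z hz => (hderiv z hz).deriv)
  have hF_int : IntegrableOn F (Set.Ioi c) :=
    Integrable.mono' hg hF_meas (ae_restrict_of_forall_mem measurableSet_Ioi hF)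
  have hF'_int : IntegrableOn F' (Set.Ioi c) :=
    Integrable.mono' hg' hF'_meas (ae_restrict_of_forall_mem measurableSet_Ioi hF')
  refine ⟨hF'_int, ?_⟩
  rw [integral_Ioi_of_hasDerivAt_of_tendsto hcont hderiv hF'_int
    (tendsto_zero_of_hasDerivAt_of_integrableOn_Ioi hderiv hF'_int hF_int), hc, sub_zero]

lemma rpow_half_le_mul_rpow_half {x y c : ℝ} (hc : 0 ≤ c) (h : x ≤ c ^ 2 * y) :
    x ^ ((1 : ℝ) / 2) ≤ c * y ^ ((1 : ℝ) / 2) := by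
  rw [← Real.sqrt_eq_rpow, ← Real.sqrt_eq_rpow]
  calc √x ≤ √(c ^ 2 * y) := Real.sqrt_le_sqrt h
    _ = c * √y := by rw [Real.sqrt_mul (sq_nonneg c), Real.sqrt_sq hc]

lemma exists_abs_le_of_continuous_of_tendsto_atTop {f : ℝ → ℝ} {l : ℝ} (hf : Continuous f)
    (hl : Tendsto f atTop (nhds l)) (c : ℝ) : ∃ B, ∀ z, c ≤ z → |f z| ≤ B := by
  obtain ⟨N, hN⟩ := eventually_atTop.1 (hl.abs.eventually_le_const (lt_add_one |l|))
  obtain ⟨K, hK⟩ := isCompact_Icc.exists_bound_of_continuousOn (s := Set.Icc c N) hf.continuousOn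
  refine ⟨max K (|l| + 1), fun z hz => ?_⟩
  rcases le_total z N with hzN | hNz
  · exact (hK z ⟨hz, hzN⟩).trans (le_max_left _ _)
  · exact (hN z hNz).trans (le_max_right _ _)

lemma two_mul_abs_inner_le {E : Type*} [NormedAddCommGroup E] [InnerProductSpace ℝ E] (x y : E) :
    2 * |⟪x, y⟫_ℝ| ≤ ‖x‖ ^ 2 + ‖y‖ ^ 2 := by
  linarith [abs_real_inner_le_norm x y, two_mul_le_add_sq ‖x‖ ‖y‖]

lemma norm_add_sq_le {E : Type*} [SeminormedAddCommGroup E] (x y : E) :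
    ‖x + y‖ ^ 2 ≤ 2 * (‖x‖ ^ 2 + ‖y‖ ^ 2) :=
  (pow_le_pow_left₀ (norm_nonneg _) (norm_add_le x y) 2).trans add_sq_le

end IntegralTools

lemma hasDerivAt_deriv_of_contDiff_two {E : Type*} [NormedAddCommGroup E] [NormedSpace ℝ E]
    {φ : ℝ → E} (hφ : ContDiff ℝ 2 φ) (z : ℝ) :
    HasDerivAt (deriv φ) (iteratedDeriv 2 φ z) z := by
  rw [iteratedDeriv_succ, iteratedDeriv_one]
  exact (hφ.differentiable_deriv_two z).hasDerivAt

section Pointwise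

variable {k V V' r s q M B Q δ : ℝ} {μ x x₁ x₂ a : ℂ}

lemma resolvent_clear_denominator (hk : k ≠ 0)
    (h : (conj μ - V) * x - 1 / (Complex.I * k) * (x₂ + 2 * r * x₁ + q * x) = a) :
    k * ((conj μ - V) * x) + Complex.I * (x₂ + 2 * r * x₁ + q * x) = k * a := by
  have hkC : (k : ℂ) ≠ 0 := Complex.ofReal_ne_zero.2 hk
  rw [← h]
  field_simp
  linear_combination (2 * r * x₁ + q * x + x₂) * Complex.I_sq

-- The real inner product with `I * x` is the imaginary part of the pairing with `x`: it removes the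
-- real potential `V` and keeps the damping `-μ.im`.
lemma inner_I_mul_resolvent
    (h : k * ((conj μ - V) * x) + Complex.I * (x₂ + 2 * r * x₁ + q * x) = k * a) :
    k * ⟪Complex.I * x, a⟫_ℝ
      = -(k * μ.im * ‖x‖ ^ 2) + (⟪x, x₂⟫_ℝ + 2 * r * ⟪x, x₁⟫_ℝ + q * ‖x‖ ^ 2) := by
  have hre := congrArg Complex.re h
  have him := congrArg Complex.im h
  simp only [Complex.add_re, Complex.add_im, Complex.sub_re, Complex.sub_im, Complex.mul_re,
    Complex.mul_im, Complex.ofReal_re, Complex.ofReal_im, Complex.conj_re, Complex.conj_im,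
    Complex.I_re, Complex.I_im, Complex.re_ofNat, Complex.im_ofNat] at hre him
  simp only [Complex.inner, Complex.sq_norm, Complex.normSq_apply, Complex.mul_re, Complex.mul_im,
    Complex.conj_re, Complex.conj_im, Complex.I_re, Complex.I_im]
  linear_combination x.im * hre - x.re * him

lemma energy_density_le (hk : 0 < k) (hμ : 0 < μ.im) (hδ : |2 * r - s| ≤ δ) (hq : q ≤ Q)
    (hlarge : 2 * δ ^ 2 + 4 * Q ≤ k * μ.im)
    (h : k * ((conj μ - V) * x) + Complex.I * (x₂ + 2 * r * x₁ + q * x) = k * a) :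
    k * μ.im / 4 * ‖x‖ ^ 2 + 1 / 2 * ‖x₁‖ ^ 2
      ≤ k / (2 * μ.im) * ‖a‖ ^ 2 + (‖x₁‖ ^ 2 + ⟪x, x₂⟫_ℝ + s * ⟪x, x₁⟫_ℝ) := by
  have identity := inner_I_mul_resolvent h
  have forcing : -⟪Complex.I * x, a⟫_ℝ ≤ μ.im / 2 * ‖x‖ ^ 2 + 1 / (2 * μ.im) * ‖a‖ ^ 2 := by
    have cauchy : -⟪Complex.I * x, a⟫_ℝ ≤ ‖x‖ * ‖a‖ := by
      simpa using (neg_le_abs _).trans (abs_real_inner_le_norm (Complex.I * x) a)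
    have young : μ.im / 2 * ‖x‖ ^ 2 + 1 / (2 * μ.im) * ‖a‖ ^ 2 - ‖x‖ * ‖a‖
        = 1 / (2 * μ.im) * (μ.im * ‖x‖ - ‖a‖) ^ 2 := by
      field_simp
      ring
    have : 0 ≤ 1 / (2 * μ.im) * (μ.im * ‖x‖ - ‖a‖) ^ 2 := by positivity
    linarith
  have drift : (2 * r - s) * ⟪x, x₁⟫_ℝ ≤ δ ^ 2 / 2 * ‖x‖ ^ 2 + 1 / 2 * ‖x₁‖ ^ 2 :=
    calc (2 * r - s) * ⟪x, x₁⟫_ℝ ≤ |2 * r - s| * |⟪x, x₁⟫_ℝ| :=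
          (le_abs_self _).trans (abs_mul _ _).le
      _ ≤ δ * (‖x‖ * ‖x₁‖) :=
          mul_le_mul hδ (abs_real_inner_le_norm x x₁) (abs_nonneg _) ((abs_nonneg _).trans hδ)
      _ ≤ δ ^ 2 / 2 * ‖x‖ ^ 2 + 1 / 2 * ‖x₁‖ ^ 2 := by
          linarith [two_mul_le_add_sq (δ * ‖x‖) ‖x₁‖, mul_pow δ ‖x‖ 2]
  have zeroth : q * ‖x‖ ^ 2 ≤ Q * ‖x‖ ^ 2 := by gcongr
  have absorb := mul_le_mul_of_nonneg_right hlarge (sq_nonneg ‖x‖)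
  have forcing_scaled := mul_le_mul_of_nonneg_left forcing hk.le
  have expand : k * (μ.im / 2 * ‖x‖ ^ 2 + 1 / (2 * μ.im) * ‖a‖ ^ 2)
      = k * μ.im / 2 * ‖x‖ ^ 2 + k / (2 * μ.im) * ‖a‖ ^ 2 := by ring
  linarith

lemma norm_lower_order_sq_le (hr : |r| ≤ M) (hq : |q| ≤ Q) :
    ‖2 * (r : ℂ) * x₁ + q * x‖ ^ 2 ≤ 8 * M ^ 2 * ‖x₁‖ ^ 2 + 2 * Q ^ 2 * ‖x‖ ^ 2 := by
  have triangle : ‖2 * (r : ℂ) * x₁ + q * x‖ ≤ 2 * M * ‖x₁‖ + Q * ‖x‖ := by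
    refine (norm_add_le _ _).trans ?_
    simp only [norm_mul, Complex.norm_real, Complex.norm_ofNat, Real.norm_eq_abs]
    gcongr
  calc ‖2 * (r : ℂ) * x₁ + q * x‖ ^ 2 ≤ (2 * M * ‖x₁‖ + Q * ‖x‖) ^ 2 := by gcongr
    _ ≤ 2 * ((2 * M * ‖x₁‖) ^ 2 + (Q * ‖x‖) ^ 2) := add_sq_le
    _ = 8 * M ^ 2 * ‖x₁‖ ^ 2 + 2 * Q ^ 2 * ‖x‖ ^ 2 := by ring

lemma norm_zeroth_order_sq_le (hr : |r| ≤ M) (hq : |q| ≤ Q)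
    (h : k * ((conj μ - V) * x) + Complex.I * (x₂ + 2 * r * x₁ + q * x) = k * a) :
    k ^ 2 * ‖(conj μ - V) * x‖ ^ 2
      ≤ 2 * k ^ 2 * ‖a‖ ^ 2 + 4 * ‖x₂‖ ^ 2
        + (32 * M ^ 2 * ‖x₁‖ ^ 2 + 8 * Q ^ 2 * ‖x‖ ^ 2) := by
  have isolate : k * ((conj μ - V) * x)
      = k * a + -(Complex.I * (x₂ + (2 * r * x₁ + q * x))) := by
    linear_combination h
  have outer := norm_add_sq_le (k * a) (-(Complex.I * (x₂ + (2 * r * x₁ + q * x))))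
  have inner := norm_add_sq_le x₂ (2 * r * x₁ + q * x)
  rw [← isolate] at outer
  simp only [norm_neg, norm_mul, Complex.norm_real, Complex.norm_I, one_mul, mul_pow,
    Real.norm_eq_abs, sq_abs] at outer
  rw [norm_mul, mul_pow]
  linarith [norm_lower_order_sq_le (x := x) (x₁ := x₁) hr hq]

-- Expand `‖k * P + I * x₂‖ ^ 2` with `P = (conj μ - V) * x`: the cross term is `⟪P, I * x₂⟫`.
lemma second_derivative_density_le (hk : 0 < k) (hμ : 0 < μ.im) (hr : |r| ≤ M) (hq : |q| ≤ Q)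
    (hV' : |V'| ≤ B)
    (h : k * ((conj μ - V) * x) + Complex.I * (x₂ + 2 * r * x₁ + q * x) = k * a) :
    ‖x₂‖ ^ 2 ≤ 2 * k ^ 2 * ‖a‖ ^ 2 + (16 * M ^ 2 + B * k) * ‖x₁‖ ^ 2
      + (4 * Q ^ 2 + B * k) * ‖x‖ ^ 2
      - 2 * k * (⟪(conj μ - V) * x, Complex.I * x₂⟫_ℝ - μ.im * ‖x₁‖ ^ 2
        - V' * ⟪x, Complex.I * x₁⟫_ℝ) := by
  set P : ℂ := (conj μ - V) * x
  set L : ℂ := 2 * r * x₁ + q * x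
  have expand : ‖k * P + Complex.I * x₂‖ ^ 2
      = k ^ 2 * ‖P‖ ^ 2 + 2 * k * ⟪P, Complex.I * x₂⟫_ℝ + ‖x₂‖ ^ 2 := by
    rw [norm_add_sq_real, ← Complex.real_smul, real_inner_smul_left, norm_smul,
      norm_mul Complex.I, Complex.norm_I, mul_pow, Real.norm_eq_abs, sq_abs]
    ring
  have upper : ‖k * P + Complex.I * x₂‖ ^ 2
      ≤ 2 * k ^ 2 * ‖a‖ ^ 2 + (16 * M ^ 2 * ‖x₁‖ ^ 2 + 4 * Q ^ 2 * ‖x‖ ^ 2) := by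
    have rearrange : k * P + Complex.I * x₂ = k * a + -(Complex.I * L) := by
      linear_combination h
    have triangle := norm_add_sq_le (k * a) (-(Complex.I * L))
    rw [← rearrange, norm_neg, norm_mul, norm_mul, Complex.norm_I, Complex.norm_real, one_mul,
      mul_pow, Real.norm_eq_abs, sq_abs] at triangle
    linarith [norm_lower_order_sq_le (x := x) (x₁ := x₁) hr hq]
  have shear : -(2 * k * (V' * ⟪x, Complex.I * x₁⟫_ℝ)) ≤ k * (B * (‖x‖ ^ 2 + ‖x₁‖ ^ 2)) := by
    have inner_le := two_mul_abs_inner_le x (Complex.I * x₁)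
    rw [norm_mul, Complex.norm_I, one_mul] at inner_le
    calc -(2 * k * (V' * ⟪x, Complex.I * x₁⟫_ℝ))
        ≤ |2 * k * (V' * ⟪x, Complex.I * x₁⟫_ℝ)| := neg_le_abs _
      _ = k * (|V'| * (2 * |⟪x, Complex.I * x₁⟫_ℝ|)) := by
          rw [abs_mul, abs_mul V', abs_of_pos (by positivity : 0 < 2 * k)]
          ring
      _ ≤ k * (B * (‖x‖ ^ 2 + ‖x₁‖ ^ 2)) := by
          gcongr
          exact (abs_nonneg _).trans hV'
  have damping : 0 ≤ 2 * k * (μ.im * ‖x₁‖ ^ 2) := by positivity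
  have zeroth : 0 ≤ k ^ 2 * ‖P‖ ^ 2 := by positivity
  linarith

end Pointwise

/-- `w` is a nonnegative weight on `(0, ∞)` with logarithmic derivative `s = w' / w`, encoded
without division as `w' = s * w`, and `σ` bounds `|s|`. The weights `ρ` and `1` of the two families
of estimates are both of this kind. -/
structure IsLogLipschitzWeight (w s : ℝ → ℝ) (σ : ℝ) : Prop where
  continuousWithinAt : ContinuousWithinAt w (Set.Ici 0) 0
  nonneg : ∀ z, 0 < z → 0 ≤ w z
  hasDerivAt : ∀ z, 0 < z → HasDerivAt w (s z * w z) z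
  abs_le : ∀ z, 0 < z → |s z| ≤ σ

section Flux

lemma integral_energy_flux_eq_zero {E : Type*} [NormedAddCommGroup E] [InnerProductSpace ℝ E]
    {w s : ℝ → ℝ} {σ : ℝ} {φ : ℝ → E} (hw : IsLogLipschitzWeight w s σ)
    (hφ : ContDiff ℝ 2 φ) (hφ0 : φ 0 = 0)
    (h0 : IntegrableOn (fun z => ‖φ z‖ ^ 2 * w z) (Set.Ioi 0))
    (h1 : IntegrableOn (fun z => ‖deriv φ z‖ ^ 2 * w z) (Set.Ioi 0))
    (h2 : IntegrableOn (fun z => ‖iteratedDeriv 2 φ z‖ ^ 2 * w z) (Set.Ioi 0)) :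
    let flux' : ℝ → ℝ := fun z => (‖deriv φ z‖ ^ 2 + ⟪φ z, iteratedDeriv 2 φ z⟫_ℝ
      + s z * ⟪φ z, deriv φ z⟫_ℝ) * w z
    IntegrableOn flux' (Set.Ioi 0) ∧ ∫ z in Set.Ioi 0, flux' z = 0 := by
  have hφ' := fun z => (hφ.differentiable two_ne_zero z).hasDerivAt
  have hφ'' := hasDerivAt_deriv_of_contDiff_two hφ
  have h_inner : ∀ z, HasDerivAt (fun z => ⟪φ z, deriv φ z⟫_ℝ)
      (⟪φ z, iteratedDeriv 2 φ z⟫_ℝ + ⟪deriv φ z, deriv φ z⟫_ℝ) z :=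
    fun z => (hφ' z).inner ℝ (hφ'' z)
  refine integral_Ioi_deriv_eq_zero_of_dominated
    (F := fun z => ⟪φ z, deriv φ z⟫_ℝ * w z)
    ((h_inner 0).continuousAt.continuousWithinAt.mul hw.continuousWithinAt) (by simp [hφ0])
    (fun z hz => ((h_inner z).mul (hw.hasDerivAt z hz)).congr_deriv ?_)
    (h0.add h1) (fun z hz => ?_)
    ((h1.add (h0.add h2)).add ((h0.add h1).const_mul σ)) (fun z hz => ?_)
  · rw [real_inner_self_eq_norm_sq]
    ring
  · have hwz := hw.nonneg z hz
    have inner_le : |⟪φ z, deriv φ z⟫_ℝ| ≤ ‖φ z‖ ^ 2 + ‖deriv φ z‖ ^ 2 := by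
      linarith [two_mul_abs_inner_le (φ z) (deriv φ z), abs_nonneg ⟪φ z, deriv φ z⟫_ℝ]
    rw [Pi.add_apply, ← add_mul, Real.norm_eq_abs, abs_mul, abs_of_nonneg hwz]
    gcongr
  · have hwz := hw.nonneg z hz
    have hs := hw.abs_le z hz
    have hσ : 0 ≤ σ := (abs_nonneg _).trans hs
    have inner_le : ∀ y, |⟪φ z, y⟫_ℝ| ≤ ‖φ z‖ ^ 2 + ‖y‖ ^ 2 := fun y => by
      linarith [two_mul_abs_inner_le (φ z) y, abs_nonneg ⟪φ z, y⟫_ℝ]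
    calc ‖(‖deriv φ z‖ ^ 2 + ⟪φ z, iteratedDeriv 2 φ z⟫_ℝ + s z * ⟪φ z, deriv φ z⟫_ℝ) * w z‖
        ≤ (‖deriv φ z‖ ^ 2 + |⟪φ z, iteratedDeriv 2 φ z⟫_ℝ|
            + |s z| * |⟪φ z, deriv φ z⟫_ℝ|) * w z := by
          rw [Real.norm_eq_abs, abs_mul, abs_of_nonneg hwz, ← abs_mul]
          gcongr
          exact (abs_add_three _ _ _).trans_eq (by rw [abs_of_nonneg (sq_nonneg ‖deriv φ z‖)])
      _ ≤ (‖deriv φ z‖ ^ 2 + (‖φ z‖ ^ 2 + ‖iteratedDeriv 2 φ z‖ ^ 2)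
            + σ * (‖φ z‖ ^ 2 + ‖deriv φ z‖ ^ 2)) * w z := by
          gcongr
          · exact inner_le _
          · exact inner_le _
      _ = _ := by
          simp only [Pi.add_apply]
          ring

lemma inner_sub_mul_I_mul_self (μ y : ℂ) (V : ℝ) :
    ⟪(conj μ - V) * y, Complex.I * y⟫_ℝ = -(μ.im * ‖y‖ ^ 2) := by
  simp only [Complex.inner, Complex.sq_norm, Complex.normSq_apply, Complex.mul_re, Complex.mul_im,
    Complex.sub_re, Complex.sub_im, Complex.conj_re, Complex.conj_im, Complex.ofReal_re,
    Complex.ofReal_im, Complex.I_re, Complex.I_im]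
  ring

lemma hasDerivAt_rotated_flux {V : ℝ → ℝ} {φ : ℝ → ℂ} (μ : ℂ) (hV : Differentiable ℝ V)
    (hφ : ContDiff ℝ 2 φ) (z : ℝ) :
    HasDerivAt (fun z => ⟪(conj μ - V z) * φ z, Complex.I * deriv φ z⟫_ℝ)
      (⟪(conj μ - V z) * φ z, Complex.I * iteratedDeriv 2 φ z⟫_ℝ - μ.im * ‖deriv φ z‖ ^ 2
        - deriv V z * ⟪φ z, Complex.I * deriv φ z⟫_ℝ) z := by
  have hP := ((hV z).hasDerivAt.ofReal_comp.const_sub (conj μ)).mul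
    (hφ.differentiable two_ne_zero z).hasDerivAt
  refine (hP.inner ℝ ((hasDerivAt_deriv_of_contDiff_two hφ z).const_mul Complex.I)).congr_deriv ?_
  rw [inner_add_left, inner_sub_mul_I_mul_self, neg_mul, inner_neg_left, ← Complex.real_smul,
    real_inner_smul_left, Pi.mul_apply]
  ring

lemma integral_rotated_flux_eq_zero {V : ℝ → ℝ} {φ : ℝ → ℂ} {B : ℝ} (μ : ℂ)
    (hV : Differentiable ℝ V) (hV' : ∀ z, 0 < z → |deriv V z| ≤ B)
    (hφ : ContDiff ℝ 2 φ) (hφ0 : φ 0 = 0) (h0 : MemL2 φ) (h1 : MemL2 (deriv φ))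
    (h2 : MemL2 (iteratedDeriv 2 φ)) (hP : MemL2 fun z => (conj μ - V z) * φ z) :
    let flux' : ℝ → ℝ := fun z =>
      ⟪(conj μ - V z) * φ z, Complex.I * iteratedDeriv 2 φ z⟫_ℝ - μ.im * ‖deriv φ z‖ ^ 2
        - deriv V z * ⟪φ z, Complex.I * deriv φ z⟫_ℝ
    IntegrableOn flux' (Set.Ioi 0) ∧ ∫ z in Set.Ioi 0, flux' z = 0 := by
  have hflux := hasDerivAt_rotated_flux μ hV hφ
  have inner_le : ∀ x y : ℂ, |⟪x, Complex.I * y⟫_ℝ| ≤ ‖x‖ ^ 2 + ‖y‖ ^ 2 := fun x y => by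
    have twice := two_mul_abs_inner_le x (Complex.I * y)
    rw [norm_mul, Complex.norm_I, one_mul] at twice
    linarith [abs_nonneg ⟪x, Complex.I * y⟫_ℝ]
  refine integral_Ioi_deriv_eq_zero_of_dominated (hflux 0).continuousAt.continuousWithinAt
    (by simp [hφ0]) (fun z _ => hflux z) (Integrable.add hP h1) (fun z _ => inner_le _ _)
    (((Integrable.add hP h2).add (h1.const_mul |μ.im|)).add ((Integrable.add h0 h1).const_mul B))
    (fun z hz => ?_)
  have hB : 0 ≤ B := (abs_nonneg _).trans (hV' z hz)
  refine (norm_sub_le _ _).trans (add_le_add ((norm_sub_le _ _).trans (add_le_add ?_ ?_)) ?_)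
  · exact inner_le _ _
  · rw [Real.norm_eq_abs, abs_mul, abs_of_nonneg (sq_nonneg ‖deriv φ z‖)]
  · rw [Real.norm_eq_abs, abs_mul]
    exact mul_le_mul (hV' z hz) (inner_le _ _) (abs_nonneg _) hB

end Flux

/-- `φ` is a `C²` solution, vanishing at `0`, of
`(conj μ - V) φ - (1/(ik)) (φ'' + 2 r φ' + q φ) = a` on `(0, ∞)`. The auxiliary problem is the case
`r = ρ'/ρ`, `q = (ρ'/ρ)' + (ρ'/ρ)²`, `a = A'`. -/
structure IsResolventSolution (k : ℝ) (μ : ℂ) (V r q : ℝ → ℝ) (a φ : ℝ → ℂ) : Prop where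
  contDiff : ContDiff ℝ 2 φ
  map_zero : φ 0 = 0
  equation : ∀ z : ℝ, 0 < z →
    (conj μ - V z) * φ z - 1 / (Complex.I * k)
      * (iteratedDeriv 2 φ z + 2 * r z * deriv φ z + q z * φ z) = a z

namespace IsResolventSolution

variable {k M B Q δ σ : ℝ} {μ : ℂ} {V r q w s : ℝ → ℝ} {a φ : ℝ → ℂ}

lemma energy_estimate (hφ : IsResolventSolution k μ V r q a φ) (hk : 0 < k) (hμ : 0 < μ.im)
    (hw : IsLogLipschitzWeight w s σ) (hδ : ∀ z, 0 < z → |2 * r z - s z| ≤ δ)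
    (hq : ∀ z, 0 < z → q z ≤ Q) (hlarge : 2 * δ ^ 2 + 4 * Q ≤ k * μ.im)
    (ha : IntegrableOn (fun z => ‖a z‖ ^ 2 * w z) (Set.Ioi 0))
    (h0 : IntegrableOn (fun z => ‖φ z‖ ^ 2 * w z) (Set.Ioi 0))
    (h1 : IntegrableOn (fun z => ‖deriv φ z‖ ^ 2 * w z) (Set.Ioi 0))
    (h2 : IntegrableOn (fun z => ‖iteratedDeriv 2 φ z‖ ^ 2 * w z) (Set.Ioi 0)) :
    k * μ.im / 4 * (∫ z in Set.Ioi 0, ‖φ z‖ ^ 2 * w z)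
        + 1 / 2 * (∫ z in Set.Ioi 0, ‖deriv φ z‖ ^ 2 * w z)
      ≤ k / (2 * μ.im) * ∫ z in Set.Ioi 0, ‖a z‖ ^ 2 * w z := by
  obtain ⟨flux_int, flux_zero⟩ :=
    integral_energy_flux_eq_zero hw hφ.contDiff hφ.map_zero h0 h1 h2
  have integrated := setIntegral_mono_on ((h0.const_mul (k * μ.im / 4)).add (h1.const_mul (1 / 2)))
    ((ha.const_mul (k / (2 * μ.im))).add flux_int) measurableSet_Ioi fun z hz => by
      have density := mul_le_mul_of_nonneg_right
        (energy_density_le hk hμ (hδ z hz) (hq z hz) hlarge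
          (resolvent_clear_denominator hk.ne' (hφ.equation z hz))) (hw.nonneg z hz)
      simp only [Pi.add_apply]
      linarith
  rw [integral_add' (h0.const_mul _) (h1.const_mul _), integral_add' (ha.const_mul _) flux_int,
    flux_zero, add_zero] at integrated
  simpa only [integral_const_mul] using integrated

lemma integral_sq_le_and_integral_deriv_sq_le (hφ : IsResolventSolution k μ V r q a φ)
    (hk : 0 < k) (hμ : 0 < μ.im)
    (hw : IsLogLipschitzWeight w s σ) (hδ : ∀ z, 0 < z → |2 * r z - s z| ≤ δ)
    (hq : ∀ z, 0 < z → q z ≤ Q) (hlarge : 2 * δ ^ 2 + 4 * Q ≤ k * μ.im)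
    (ha : IntegrableOn (fun z => ‖a z‖ ^ 2 * w z) (Set.Ioi 0))
    (h0 : IntegrableOn (fun z => ‖φ z‖ ^ 2 * w z) (Set.Ioi 0))
    (h1 : IntegrableOn (fun z => ‖deriv φ z‖ ^ 2 * w z) (Set.Ioi 0))
    (h2 : IntegrableOn (fun z => ‖iteratedDeriv 2 φ z‖ ^ 2 * w z) (Set.Ioi 0)) :
    (∫ z in Set.Ioi 0, ‖φ z‖ ^ 2 * w z)
        ≤ (√2 / μ.im) ^ 2 * ∫ z in Set.Ioi 0, ‖a z‖ ^ 2 * w z ∧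
      (∫ z in Set.Ioi 0, ‖deriv φ z‖ ^ 2 * w z)
        ≤ (√k / √μ.im) ^ 2 * ∫ z in Set.Ioi 0, ‖a z‖ ^ 2 * w z := by
  have energy := hφ.energy_estimate hk hμ hw hδ hq hlarge ha h0 h1 h2
  have integral_nonneg : ∀ f : ℝ → ℂ, 0 ≤ ∫ z in Set.Ioi 0, ‖f z‖ ^ 2 * w z := fun f =>
    setIntegral_nonneg measurableSet_Ioi fun z hz => mul_nonneg (sq_nonneg _) (hw.nonneg z hz)
  have hX := integral_nonneg φ
  have hY := integral_nonneg (deriv φ)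
  rw [div_pow, div_pow, Real.sq_sqrt zero_le_two, Real.sq_sqrt hk.le, Real.sq_sqrt hμ.le]
  constructor
  · refine le_of_mul_le_mul_left ?_ (show 0 < k * μ.im / 4 by positivity)
    calc _ ≤ k / (2 * μ.im) * ∫ z in Set.Ioi 0, ‖a z‖ ^ 2 * w z := by linarith
      _ = _ := by field_simp; ring
  · have : 0 ≤ k * μ.im / 4 * ∫ z in Set.Ioi 0, ‖φ z‖ ^ 2 * w z := by positivity
    calc _ ≤ 2 * (k / (2 * μ.im) * ∫ z in Set.Ioi 0, ‖a z‖ ^ 2 * w z) := by linarith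
      _ = _ := by field_simp

lemma memL2_zeroth_order (hφ : IsResolventSolution k μ V r q a φ) (hk : 0 < k)
    (hV : Continuous V) (hr : ∀ z, 0 < z → |r z| ≤ M) (hq : ∀ z, 0 < z → |q z| ≤ Q)
    (ha : MemL2 a) (h0 : MemL2 φ) (h1 : MemL2 (deriv φ)) (h2 : MemL2 (iteratedDeriv 2 φ)) :
    MemL2 fun z => (conj μ - V z) * φ z := by
  have hφ_cont := hφ.contDiff.continuous
  have meas : Continuous fun z => k ^ 2 * ‖(conj μ - V z) * φ z‖ ^ 2 := by fun_prop
  have scaled : IntegrableOn (fun z => k ^ 2 * ‖(conj μ - V z) * φ z‖ ^ 2) (Set.Ioi 0) := by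
    refine Integrable.mono' (((Integrable.const_mul ha (2 * k ^ 2)).add (h2.const_mul 4)).add
      ((h1.const_mul (32 * M ^ 2)).add (h0.const_mul (8 * Q ^ 2)))) meas.aestronglyMeasurable
      (ae_restrict_of_forall_mem measurableSet_Ioi fun z hz => ?_)
    rw [Real.norm_of_nonneg (by positivity)]
    exact norm_zeroth_order_sq_le (hr z hz) (hq z hz)
      (resolvent_clear_denominator hk.ne' (hφ.equation z hz))
  exact (integrable_const_mul_iff (pow_pos hk 2).ne'.isUnit _).1 scaled

lemma second_derivative_estimate (hφ : IsResolventSolution k μ V r q a φ) (hk : 0 < k)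
    (hμ : 0 < μ.im) (hV : Differentiable ℝ V) (hV' : ∀ z, 0 < z → |deriv V z| ≤ B)
    (hr : ∀ z, 0 < z → |r z| ≤ M) (hq : ∀ z, 0 < z → |q z| ≤ Q)
    (ha : MemL2 a) (h0 : MemL2 φ) (h1 : MemL2 (deriv φ)) (h2 : MemL2 (iteratedDeriv 2 φ)) :
    (∫ z in Set.Ioi 0, ‖iteratedDeriv 2 φ z‖ ^ 2)
      ≤ 2 * k ^ 2 * (∫ z in Set.Ioi 0, ‖a z‖ ^ 2)
        + (16 * M ^ 2 + B * k) * (∫ z in Set.Ioi 0, ‖deriv φ z‖ ^ 2)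
        + (4 * Q ^ 2 + B * k) * (∫ z in Set.Ioi 0, ‖φ z‖ ^ 2) := by
  obtain ⟨flux_int, flux_zero⟩ := integral_rotated_flux_eq_zero μ hV hV' hφ.contDiff hφ.map_zero
    h0 h1 h2 (hφ.memL2_zeroth_order hk hV.continuous hr hq ha h0 h1 h2)
  have ha' := Integrable.const_mul ha (2 * k ^ 2)
  have h1' := Integrable.const_mul h1 (16 * M ^ 2 + B * k)
  have h0' := Integrable.const_mul h0 (4 * Q ^ 2 + B * k)
  have integrated := setIntegral_mono_on h2
    (((ha'.add h1').add h0').sub (flux_int.const_mul (2 * k))) measurableSet_Ioi fun z hz =>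
      second_derivative_density_le hk hμ (hr z hz) (hq z hz) (hV' z hz)
        (resolvent_clear_denominator hk.ne' (hφ.equation z hz))
  rw [integral_sub' ((ha'.add h1').add h0') (flux_int.const_mul _), integral_add' (ha'.add h1') h0',
    integral_add' ha' h1'] at integrated
  simpa only [integral_const_mul, flux_zero, mul_zero, sub_zero] using integrated

end IsResolventSolution

section PowerWeight

/-- The zeroth-order coefficient `(ρ'/ρ)' + (ρ'/ρ)²` of the auxiliary problem for `ρ(z) = 1 + z^m`;
it is equal to `ρ''/ρ` on `(0, ∞)`. -/
noncomputable def qFun (m : ℕ) (z : ℝ) : ℝ :=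
  deriv (rFun m) z + rFun m z ^ 2

lemma pow_le_one_add_pow {z : ℝ} (hz : 0 ≤ z) {a b : ℕ} (hab : a ≤ b) : z ^ a ≤ 1 + z ^ b := by
  rcases le_total z 1 with hz1 | hz1
  · linarith [pow_le_one₀ hz hz1 (n := a), pow_nonneg hz b]
  · linarith [pow_le_pow_right₀ hz1 hab]

lemma rFun_eq (m : ℕ) (z : ℝ) : rFun m z = m * z ^ (m - 1) / (1 + z ^ m) := by
  simp [rFun]

lemma abs_rFun_le (m : ℕ) {z : ℝ} (hz : 0 ≤ z) : |rFun m z| ≤ m := by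
  rw [rFun_eq, abs_of_nonneg (by positivity), div_le_iff₀ (by positivity)]
  gcongr
  exact pow_le_one_add_pow hz (Nat.sub_le m 1)

lemma qFun_eq (m : ℕ) {z : ℝ} (hz : 0 ≤ z) :
    qFun m z = m * ((m - 1 : ℕ) * z ^ (m - 1 - 1)) / (1 + z ^ m) := by
  have hρ : 1 + z ^ m ≠ 0 := by positivity
  have hderiv := ((hasDerivAt_pow (m - 1) z).const_mul (m : ℝ)).div
    ((hasDerivAt_pow m z).const_add 1) hρ
  rw [qFun, (hderiv.congr_of_eventuallyEq (.of_forall (rFun_eq m))).deriv, rFun_eq]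
  field_simp
  ring

lemma abs_qFun_le (m : ℕ) {z : ℝ} (hz : 0 ≤ z) : |qFun m z| ≤ (m : ℝ) ^ 2 := by
  rw [qFun_eq m hz, abs_of_nonneg (by positivity), div_le_iff₀ (by positivity), sq, mul_assoc]
  gcongr
  · exact Nat.sub_le m 1
  · exact pow_le_one_add_pow hz (by lia)

lemma isLogLipschitzWeight_one_add_pow (m : ℕ) :
    IsLogLipschitzWeight (fun z => 1 + z ^ m) (rFun m) m where
  continuousWithinAt := by fun_prop
  nonneg z hz := by positivity
  hasDerivAt z hz := by
    refine ((hasDerivAt_pow m z).const_add 1).congr_deriv ?_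
    rw [rFun_eq, div_mul_cancel₀ _ (by positivity)]
  abs_le z hz := abs_rFun_le m hz.le

lemma isLogLipschitzWeight_one : IsLogLipschitzWeight (fun _ => 1) (fun _ => 0) 0 where
  continuousWithinAt := continuousWithinAt_const
  nonneg _ _ := zero_le_one
  hasDerivAt z _ := by simpa using hasDerivAt_const z (1 : ℝ)
  abs_le _ _ := abs_zero.le

lemma MemL2w.memL2 {m : ℕ} {f : ℝ → ℂ} (hf : MemL2w m f) : MemL2 f := by
  have hcont : ContinuousOn (fun z : ℝ => (1 + z ^ m)⁻¹) (Set.Ioi 0) :=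
    ContinuousOn.inv₀ (by fun_prop) fun z hz => by
      have : 0 < z := hz
      positivity
  refine (Integrable.mul_bdd (c := 1) hf (hcont.aestronglyMeasurable measurableSet_Ioi)
    (ae_restrict_of_forall_mem measurableSet_Ioi fun z hz => ?_)).congr
    (ae_restrict_of_forall_mem measurableSet_Ioi fun z hz => ?_)
  · have : 0 < z ^ m := pow_pos hz m
    rw [norm_inv, Real.norm_of_nonneg (by positivity)]
    exact inv_le_one_of_one_le₀ (by linarith)
  · have : 0 < z ^ m := pow_pos hz m
    exact mul_inv_cancel_right₀ (by positivity) _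

end PowerWeight

/-- The constant in the bound on `φ''`, where `M`, `Q`, `B` bound `ρ'/ρ`, the zeroth-order
coefficient and the shear `V'`, and `β₀` is a positive lower bound for `Im μ`. -/
noncomputable def secondDerivConst (M Q B β₀ : ℝ) : ℝ :=
  √(2 + (16 * M ^ 2 + B) / β₀ + (4 * Q ^ 2 + B) * (2 / β₀ ^ 2))

lemma secondDerivConst_pos {M Q B β₀ : ℝ} (hB : 0 ≤ B) (hβ₀ : 0 < β₀) :
    0 < secondDerivConst M Q B β₀ :=
  Real.sqrt_pos.2 (by positivity)

lemma second_derivative_terms_le {k β β₀ M Q B X Y Z : ℝ} (hk : 1 ≤ k) (hB : 0 ≤ B)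
    (hβ₀ : 0 < β₀) (hβ : β₀ ≤ β) (hZ : 0 ≤ Z) (hX : X ≤ (√2 / β) ^ 2 * Z)
    (hY : Y ≤ (√k / √β) ^ 2 * Z) :
    2 * k ^ 2 * Z + (16 * M ^ 2 + B * k) * Y + (4 * Q ^ 2 + B * k) * X
      ≤ (secondDerivConst M Q B β₀ * k) ^ 2 * Z := by
  have hk0 : 0 < k := by linarith
  have hβ0 : 0 < β := hβ₀.trans_le hβ
  rw [div_pow, Real.sq_sqrt zero_le_two] at hX
  rw [div_pow, Real.sq_sqrt hk0.le, Real.sq_sqrt hβ0.le] at hY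
  have hX₀ : X ≤ 2 / β₀ ^ 2 * Z := hX.trans (by gcongr)
  have hY₀ : Y ≤ k / β₀ * Z := hY.trans (by gcongr)
  have first_order : (16 * M ^ 2 + B * k) * Y ≤ (16 * M ^ 2 * k + B * k) * (k / β₀ * Z) := by
    have coeff_le : 16 * M ^ 2 ≤ 16 * M ^ 2 * k := le_mul_of_one_le_right (by positivity) hk
    calc (16 * M ^ 2 + B * k) * Y ≤ (16 * M ^ 2 + B * k) * (k / β₀ * Z) := by gcongr
      _ ≤ (16 * M ^ 2 * k + B * k) * (k / β₀ * Z) := by gcongr ?_ * _; linarith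
  have zeroth_order :
      (4 * Q ^ 2 + B * k) * X ≤ (4 * Q ^ 2 * k ^ 2 + B * k ^ 2) * (2 / β₀ ^ 2 * Z) := by
    have coeff_le : 4 * Q ^ 2 ≤ 4 * Q ^ 2 * k ^ 2 :=
      le_mul_of_one_le_right (by positivity) (one_le_pow₀ hk)
    have shear_le : B * k ≤ B * k ^ 2 := by gcongr; exact le_self_pow₀ hk two_ne_zero
    calc (4 * Q ^ 2 + B * k) * X ≤ (4 * Q ^ 2 + B * k) * (2 / β₀ ^ 2 * Z) := by gcongr
      _ ≤ (4 * Q ^ 2 * k ^ 2 + B * k ^ 2) * (2 / β₀ ^ 2 * Z) := by gcongr ?_ * _; linarith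
  calc 2 * k ^ 2 * Z + (16 * M ^ 2 + B * k) * Y + (4 * Q ^ 2 + B * k) * X
      ≤ 2 * k ^ 2 * Z + (16 * M ^ 2 * k + B * k) * (k / β₀ * Z)
        + (4 * Q ^ 2 * k ^ 2 + B * k ^ 2) * (2 / β₀ ^ 2 * Z) := by linarith
    _ = (2 + (16 * M ^ 2 + B) / β₀ + (4 * Q ^ 2 + B) * (2 / β₀ ^ 2)) * k ^ 2 * Z := by ring
    _ = (secondDerivConst M Q B β₀ * k) ^ 2 * Z := by
        rw [mul_pow, secondDerivConst, Real.sq_sqrt (by positivity)]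

namespace IsResolventSolution

variable {m : ℕ} {k B β₀ : ℝ} {μ : ℂ} {V : ℝ → ℝ} {a φ : ℝ → ℂ}

lemma wnorm_le_and_wnorm_deriv_le (hφ : IsResolventSolution k μ V (rFun m) (qFun m) a φ)
    (hk : 0 < k) (hμ : 0 < μ.im) (hlarge : 12 * (m : ℝ) ^ 2 ≤ k * μ.im) (ha : MemL2w m a)
    (h0 : MemL2w m φ) (h1 : MemL2w m (deriv φ)) (h2 : MemL2w m (iteratedDeriv 2 φ)) :
    wnorm m φ ≤ √2 / μ.im * wnorm m a ∧ wnorm m (deriv φ) ≤ √k / √μ.im * wnorm m a := by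
  have hm : (0 : ℝ) ≤ (m : ℝ) ^ 2 := sq_nonneg _
  have drift : ∀ z, 0 < z → |2 * rFun m z - rFun m z| ≤ m := fun z hz => by
    simpa only [two_mul, add_sub_cancel_right] using abs_rFun_le m hz.le
  obtain ⟨hX, hY⟩ := hφ.integral_sq_le_and_integral_deriv_sq_le hk hμ
    (isLogLipschitzWeight_one_add_pow m) drift
    (fun z hz => (le_abs_self _).trans (abs_qFun_le m hz.le)) (by linarith) ha h0 h1 h2
  exact ⟨rpow_half_le_mul_rpow_half (by positivity) hX,
    rpow_half_le_mul_rpow_half (by positivity) hY⟩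

lemma integral_unweighted_le (hφ : IsResolventSolution k μ V (rFun m) (qFun m) a φ)
    (hk : 0 < k) (hμ : 0 < μ.im) (hlarge : 12 * (m : ℝ) ^ 2 ≤ k * μ.im) (ha : MemL2 a)
    (h0 : MemL2 φ) (h1 : MemL2 (deriv φ)) (h2 : MemL2 (iteratedDeriv 2 φ)) :
    (∫ z in Set.Ioi 0, ‖φ z‖ ^ 2) ≤ (√2 / μ.im) ^ 2 * ∫ z in Set.Ioi 0, ‖a z‖ ^ 2 ∧
      (∫ z in Set.Ioi 0, ‖deriv φ z‖ ^ 2)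
        ≤ (√k / √μ.im) ^ 2 * ∫ z in Set.Ioi 0, ‖a z‖ ^ 2 := by
  have drift : ∀ z, 0 < z → |2 * rFun m z - 0| ≤ 2 * m := fun z hz => by
    rw [sub_zero, abs_mul, abs_two]
    gcongr
    exact abs_rFun_le m hz.le
  have weight_one : ∀ {f : ℝ → ℂ}, MemL2 f → IntegrableOn (fun z => ‖f z‖ ^ 2 * 1) (Set.Ioi 0) :=
    fun hf => by simpa only [mul_one, MemL2] using hf
  simpa only [mul_one] using hφ.integral_sq_le_and_integral_deriv_sq_le hk hμ
    isLogLipschitzWeight_one drift (fun z hz => (le_abs_self _).trans (abs_qFun_le m hz.le))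
    (by linarith) (weight_one ha) (weight_one h0) (weight_one h1) (weight_one h2)

lemma l2norm_estimates (hφ : IsResolventSolution k μ V (rFun m) (qFun m) a φ)
    (hV : Differentiable ℝ V) (hV' : ∀ z, 0 < z → |deriv V z| ≤ B)
    (hk : 1 ≤ k) (hβ₀ : 0 < β₀) (hμ : β₀ ≤ μ.im) (hlarge : 12 * (m : ℝ) ^ 2 ≤ k * μ.im)
    (ha : MemL2 a) (h0 : MemL2 φ) (h1 : MemL2 (deriv φ)) (h2 : MemL2 (iteratedDeriv 2 φ)) :
    l2norm φ ≤ √2 / μ.im * l2norm a ∧ l2norm (deriv φ) ≤ √k / √μ.im * l2norm a ∧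
      l2norm (iteratedDeriv 2 φ) ≤ secondDerivConst m (m ^ 2) B β₀ * k * l2norm a := by
  have hk0 : 0 < k := by linarith
  have hμ0 : 0 < μ.im := hβ₀.trans_le hμ
  have hB : 0 ≤ B := (abs_nonneg _).trans (hV' 1 one_pos)
  have hC := (secondDerivConst_pos (M := m) (Q := (m : ℝ) ^ 2) hB hβ₀).le
  obtain ⟨hX, hY⟩ := hφ.integral_unweighted_le hk0 hμ0 hlarge ha h0 h1 h2
  have hZ : 0 ≤ ∫ z in Set.Ioi 0, ‖a z‖ ^ 2 := integral_nonneg fun z => sq_nonneg ‖a z‖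
  have hW := (hφ.second_derivative_estimate hk0 hμ0 hV hV' (fun z hz => abs_rFun_le m hz.le)
    (fun z hz => abs_qFun_le m hz.le) ha h0 h1 h2).trans
    (second_derivative_terms_le hk hB hβ₀ hμ hZ hX hY)
  exact ⟨rpow_half_le_mul_rpow_half (by positivity) hX,
    rpow_half_le_mul_rpow_half (by positivity) hY,
    rpow_half_le_mul_rpow_half (by positivity) hW⟩

end IsResolventSolution

lemma exists_abs_deriv_le_of_tendsto {V : ℝ → ℝ} (hV : ContDiff ℝ 1 V)
    (hV' : Tendsto (deriv fun z => V z - z) atTop (nhds 0)) :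
    ∃ B, ∀ z, 0 < z → |deriv V z| ≤ B := by
  have hderiv : ∀ z, deriv (fun z => V z - z) z + 1 = deriv V z := fun z => by
    have hsub : HasDerivAt (fun z => V z - z) (deriv V z - 1) z :=
      (hV.differentiable one_ne_zero z).hasDerivAt.sub (hasDerivAt_id' z)
    rw [hsub.deriv, sub_add_cancel]
  obtain ⟨B, hB⟩ := exists_abs_le_of_continuous_of_tendsto_atTop (hV.continuous_deriv le_rfl)
    ((hV'.add_const 1).congr hderiv) 0
  exact ⟨B, fun z hz => hB z hz.le⟩

theorem auxiliary_resolvent_estimates_general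
    {V : ℝ → ℝ} {B : ℝ} (hV : Differentiable ℝ V) (hV' : ∀ z : ℝ, 0 < z → |deriv V z| ≤ B)
    (m : ℕ) {μm : ℝ} (hμm : 0 < μm) :
    ∃ k₀ > (0 : ℝ), ∃ C > (0 : ℝ), ∀ k : ℝ, k₀ ≤ k → ∀ μ : ℂ, μm ≤ μ.im →
      ∀ a φ : ℝ → ℂ, ContDiff ℝ 2 φ → MemL2w m a → MemL2w m φ → MemL2w m (deriv φ) →
        MemL2w m (iteratedDeriv 2 φ) → φ 0 = 0 →
        (∀ z : ℝ, 0 < z →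
          (conj μ - (V z : ℂ)) * φ z
            - (1 / (Complex.I * (k : ℂ))) * (iteratedDeriv 2 φ z
              + 2 * (rFun m z : ℂ) * deriv φ z
              + (((deriv (rFun m) z : ℝ) : ℂ) + (rFun m z : ℂ) ^ 2) * φ z)
          = a z) →
        wnorm m φ ≤ √2 / μ.im * wnorm m a ∧
        l2norm φ ≤ √2 / μ.im * l2norm a ∧
        wnorm m (deriv φ) ≤ √k / √μ.im * wnorm m a ∧
        l2norm (deriv φ) ≤ √k / √μ.im * l2norm a ∧
        l2norm (iteratedDeriv 2 φ) ≤ C * k * l2norm a := by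
  have hB : 0 ≤ B := (abs_nonneg _).trans (hV' 1 one_pos)
  refine ⟨max 1 (12 * (m : ℝ) ^ 2 / μm), by positivity, secondDerivConst m (m ^ 2) B μm,
    secondDerivConst_pos hB hμm, fun k hk μ hμ a φ hφ ha h0 h1 h2 hφ0 heq => ?_⟩
  obtain ⟨hk1, hk_large⟩ := max_le_iff.1 hk
  have hlarge : 12 * (m : ℝ) ^ 2 ≤ k * μ.im :=
    ((div_le_iff₀ hμm).1 hk_large).trans (by gcongr)
  have hsol : IsResolventSolution k μ V (rFun m) (qFun m) a φ :=
    ⟨hφ, hφ0, fun z hz => by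
      simpa only [qFun, Complex.ofReal_add, Complex.ofReal_pow] using heq z hz⟩
  obtain ⟨w0, w1⟩ := hsol.wnorm_le_and_wnorm_deriv_le (by linarith) (by linarith) hlarge
    ha h0 h1 h2
  obtain ⟨l0, l1, l2⟩ := hsol.l2norm_estimates hV hV' hk1 hμm hμ hlarge
    ha.memL2 h0.memL2 h1.memL2 h2.memL2
  exact ⟨w0, l0, w1, l1, l2⟩

/-- weighted resolvent estimates for the auxiliary problem
`(conj μ - V_s) φ - (1/(ik))[φ'' + 2(ρ'/ρ)φ' + ((ρ'/ρ)' + (ρ'/ρ)²)φ] = A'`. -/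
theorem auxiliary_resolvent_estimates
    (Vs : ℝ → ℝ) (As : ℝ)
    (hVs_smooth : ContDiff ℝ (⊤ : ℕ∞) Vs)
    (hVs0 : Vs 0 = 0)
    (hVs'pos : ∀ z : ℝ, 0 ≤ z → 0 < deriv Vs z)
    (hdecay : ∀ p : ℕ, Tendsto (fun z : ℝ => z ^ p * (Vs z - z - As)) atTop (nhds 0))
    (hderiv_decay : ∀ n : ℕ, 1 ≤ n → ∀ p : ℕ,
      Tendsto (fun z : ℝ => z ^ p * iteratedDeriv n (fun w => Vs w - w) z) atTop (nhds 0))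
    (m : ℕ) (hm : 1 ≤ m) (μm : ℝ) (hμm : 0 < μm) :
    ∃ k₀ > (0 : ℝ), ∃ C > (0 : ℝ),
      ∀ k : ℝ, k₀ ≤ k → ∀ μ : ℂ, μm ≤ μ.im →
        ∀ A φ : ℝ → ℂ, ContDiff ℝ 1 A → ContDiff ℝ 2 φ →
          MemL2w m (deriv A) → MemL2w m φ → MemL2w m (deriv φ) →
          MemL2w m (iteratedDeriv 2 φ) →
          φ 0 = 0 → Tendsto φ atTop (nhds 0) →
          (∀ z : ℝ, 0 ≤ z →
            ((starRingEnd ℂ) μ - (Vs z : ℂ)) * φ z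
              - (1 / (Complex.I * (k : ℂ))) * (iteratedDeriv 2 φ z
                + 2 * (rFun m z : ℂ) * deriv φ z
                + (((deriv (rFun m) z : ℝ) : ℂ) + (rFun m z : ℂ) ^ 2) * φ z)
            = deriv A z) →
          wnorm m φ ≤ Real.sqrt 2 / μ.im * wnorm m (deriv A) ∧
          l2norm φ ≤ Real.sqrt 2 / μ.im * l2norm (deriv A) ∧
          wnorm m (deriv φ) ≤ Real.sqrt k / Real.sqrt μ.im * wnorm m (deriv A) ∧
          l2norm (deriv φ) ≤ Real.sqrt k / Real.sqrt μ.im * l2norm (deriv A) ∧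
          l2norm (iteratedDeriv 2 φ) ≤ C * k * l2norm (deriv A) := by
  obtain ⟨B, hB⟩ := exists_abs_deriv_le_of_tendsto (hVs_smooth.of_le (by simp))
    (by simpa only [pow_zero, one_mul, iteratedDeriv_one] using hderiv_decay 1 le_rfl 0)
  obtain ⟨k₀, hk₀, C, hC, h⟩ := auxiliary_resolvent_estimates_general
    (hVs_smooth.differentiable (by simp)) hB m hμm
  exact ⟨k₀, hk₀, C, hC, fun k hk μ hμ A φ _ hφ hA h0 h1 h2 hφ0 _ heq =>
    h k hk μ hμ (deriv A) φ hφ hA h0 h1 h2 hφ0 fun z hz => heq z hz.le⟩
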